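/- Let g ≠ 0 and let β* ∈ ℝ. Suppose there exist a sequence of real numbers β_n → β* and GP solutions φ_n on [0,L] with parameter β_n, each continuously differentiable on [0,L] and not identically zero, such that sup_{x∈[0,L]}|φ_n(x)| + sup_{x∈[0,L]}|φ_n'(x)| → 0. Then β* = β_k for some integer k ≥ 1. (The quantum critical points of the BEC system are exactly the values β_k = ℏλ − (ℏ²/(4m))(kπ/L)².) -/

import Mathlib

open Set MeasureTheory intervalIntegral Filter Topology

/-- `φ` is a GP solution on `[a,b]` with parameter `β`:
`φ` is continuous on `[a,b]`, twice continuously differentiable on `(a,b)`,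
satisfies `-(ℏ²/(4m))·φ'' + (β - ℏλ)·φ + g·φ³ = 0` on `(a,b)`,
and `φ a = φ b = 0`. -/
def IsGPSolution (ℏ m lam g a b β : ℝ) (φ : ℝ → ℝ) : Prop :=
  ContinuousOn φ (Set.Icc a b) ∧
  ContDiffOn ℝ 2 φ (Set.Ioo a b) ∧
  (∀ x ∈ Set.Ioo a b,
    -(ℏ ^ 2 / (4 * m)) * deriv (deriv φ) x + (β - ℏ * lam) * φ x + g * (φ x) ^ 3 = 0) ∧
  φ a = 0 ∧ φ b = 0

/-- The quantum critical points `β_k = ℏλ - (ℏ²/(4m))·(kπ/L)²`. -/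
noncomputable def betaCrit (ℏ m lam L : ℝ) (k : ℕ) : ℝ :=
  ℏ * lam - (ℏ ^ 2 / (4 * m)) * ((k : ℝ) * Real.pi / L) ^ 2


lemma gp_fund (c L : ℝ) (hL : 0 < L) : ∃ S T : ℝ → ℝ, (∀ x, HasDerivAt S (T x) x) ∧
    (∀ x, HasDerivAt T (-c * S x) x) ∧ S 0 = 0 ∧ T 0 = 1 ∧
    (S L = 0 → ∃ k : ℕ, 1 ≤ k ∧ c = ((k : ℝ) * Real.pi / L) ^ 2) := by
  rcases lt_trichotomy c 0 with hc | hc | hc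
  · obtain ⟨r, hr, hrc⟩ : ∃ r : ℝ, 0 < r ∧ r ^ 2 = -c :=
      ⟨Real.sqrt (-c), Real.sqrt_pos.2 (by linarith), Real.sq_sqrt (by linarith)⟩
    refine ⟨fun x => Real.sinh (r * x) / r, fun x => Real.cosh (r * x), ?_, ?_, by simp, by simp, ?_⟩
    · intro x
      have h := (((hasDerivAt_id x).const_mul r).sinh).div_const r
      refine h.congr_deriv ?_
      simp only [id]
      field_simp
    · intro x
      have h := (((hasDerivAt_id x).const_mul r).cosh)
      refine h.congr_deriv ?_
      simp only [id]
      rw [← hrc]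
      field_simp
    · intro h
      have : 0 < Real.sinh (r * L) := Real.sinh_pos_iff.2 (by positivity)
      have h2 : 0 < Real.sinh (r * L) / r := by positivity
      simp only at h
      linarith
  · refine ⟨fun x => x, fun _ => 1, fun x => hasDerivAt_id x, ?_, rfl, rfl, ?_⟩
    · intro x
      subst hc
      simpa using hasDerivAt_const x (1:ℝ)
    · intro h
      simp only at h
      linarith
  · obtain ⟨r, hr, hrc⟩ : ∃ r : ℝ, 0 < r ∧ r ^ 2 = c :=
      ⟨Real.sqrt c, Real.sqrt_pos.2 (by linarith), Real.sq_sqrt (by linarith)⟩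
    refine ⟨fun x => Real.sin (r * x) / r, fun x => Real.cos (r * x), ?_, ?_, by simp, by simp, ?_⟩
    · intro x
      have h := (((hasDerivAt_id x).const_mul r).sin).div_const r
      refine h.congr_deriv ?_
      simp only [id]
      field_simp
    · intro x
      have h := (((hasDerivAt_id x).const_mul r).cos)
      refine h.congr_deriv ?_
      simp only [id]
      rw [← hrc]
      field_simp
    · intro h
      have h1 : Real.sin (r * L) = 0 := by
        rcases div_eq_zero_iff.1 h with h | h
        · exact h
        · exact absurd h hr.ne'
      obtain ⟨k, hk⟩ := Real.sin_eq_zero_iff.1 h1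
      have hkpos : 0 < k := by
        have h3 : 0 < (k : ℝ) * Real.pi := by rw [hk]; positivity
        have h4 : (0:ℝ) < k := pos_of_mul_pos_left h3 Real.pi_pos.le
        exact_mod_cast h4
      refine ⟨k.toNat, by omega, ?_⟩
      have h5 : ((k.toNat : ℕ) : ℝ) = (k : ℝ) := by
        have : ((k.toNat : ℕ) : ℤ) = k := Int.toNat_of_nonneg hkpos.le
        exact_mod_cast this
      rw [h5, hk, ← hrc]
      field_simp

/-- Representation estimate by a Wronskian and the mean value theorem. -/
lemma gp_wronskian (c L K D : ℝ) (S T φ ψ φ2 : ℝ → ℝ) (hD : 0 ≤ D)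
    (hS : ∀ x, HasDerivAt S (T x) x) (hT : ∀ x, HasDerivAt T (-c * S x) x)
    (hS0 : S 0 = 0) (hT0 : T 0 = 1) (hK : ∀ x ∈ Set.Icc 0 L, |S x| ≤ K)
    (hφ : ContinuousOn φ (Set.Icc 0 L)) (hψ : ContinuousOn ψ (Set.Icc 0 L))
    (h1 : ∀ x ∈ Set.Ioo 0 L, HasDerivAt φ (ψ x) x)
    (h2 : ∀ x ∈ Set.Ioo 0 L, HasDerivAt ψ (φ2 x) x)
    (h0 : φ 0 = 0) (hh : ∀ x ∈ Set.Ioo 0 L, |φ2 x + c * φ x| ≤ D)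
    (x : ℝ) (hx : x ∈ Set.Icc 0 L) : |φ x - ψ 0 * S x| ≤ D * K * L := by
  have hK0 : 0 ≤ K := (abs_nonneg _).trans (hK x hx)
  have hL0 : 0 ≤ L := hx.1.trans hx.2
  rcases hx.1.eq_or_lt with hx0 | hx0
  · rw [← hx0, h0, hS0]
    simp only [mul_zero, sub_zero, abs_zero]
    positivity
  have hSc : Continuous S := continuous_iff_continuousAt.2 fun x => (hS x).continuousAt
  have hTc : Continuous T := continuous_iff_continuousAt.2 fun x => (hT x).continuousAt
  have hsub : Set.Icc 0 x ⊆ Set.Icc 0 L := Set.Icc_subset_Icc_right hx.2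
  obtain ⟨t, ht, hte⟩ := exists_hasDerivAt_eq_slope
    (fun t => ψ t * S (x - t) + φ t * T (x - t))
    (fun t => (φ2 t + c * φ t) * S (x - t)) hx0
    (by
      have a1 := hψ.mono hsub
      have a2 := hφ.mono hsub
      have a3 : Continuous fun t => S (x - t) := by fun_prop
      have a4 : Continuous fun t => T (x - t) := by fun_prop
      exact (a1.mul a3.continuousOn).add (a2.mul a4.continuousOn))
    (by
      intro t ht
      have ht' : t ∈ Set.Ioo 0 L := ⟨ht.1, ht.2.trans_le hx.2⟩
      have b : HasDerivAt (fun t => x - t) (-1) t := by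
        simpa using (hasDerivAt_id t).const_sub x
      have b1 : HasDerivAt (fun t => S (x - t)) (T (x - t) * -1) t := (hS (x - t)).comp t b
      have b2 : HasDerivAt (fun t => T (x - t)) (-c * S (x - t) * -1) t := (hT (x - t)).comp t b
      refine (((h2 t ht').mul b1).add ((h1 t ht').mul b2)).congr_deriv ?_
      ring)
  have ht' : t ∈ Set.Ioo 0 L := ⟨ht.1, ht.2.trans_le hx.2⟩
  simp only [sub_self, sub_zero, hS0, hT0, h0, mul_zero, zero_mul, mul_one, zero_add, add_zero] at hte
  rw [eq_div_iff hx0.ne'] at hte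
  rw [← hte, abs_mul, abs_mul, abs_of_pos hx0]
  have e1 := hh t ht'
  have e2 := hK (x - t) ⟨by linarith [ht.2], by linarith [ht.1, hx.2]⟩
  have e3 := hx.2
  gcongr

/-- the quantum critical points of the BEC system are exactly the
values `β_k = ℏλ - (ℏ²/(4m))·(kπ/L)²`. -/
theorem stmt_3 (ℏ m lam L g : ℝ) (hℏ : 0 < ℏ) (hm : 0 < m) (hL : 0 < L)
    (hg : g ≠ 0) (βstar : ℝ)
    (β : ℕ → ℝ) (hβ : Filter.Tendsto β Filter.atTop (nhds βstar))
    (φ : ℕ → ℝ → ℝ)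
    (hsol : ∀ n, IsGPSolution ℏ m lam g 0 L (β n) (φ n))
    (hC1 : ∀ n, ContDiffOn ℝ 1 (φ n) (Set.Icc 0 L))
    (hne : ∀ n, ∃ x ∈ Set.Icc (0:ℝ) L, φ n x ≠ 0)
    (hsmall : Filter.Tendsto
      (fun n => (sSup ((fun x => |φ n x|) '' Set.Icc (0:ℝ) L)) +
        (sSup ((fun x => |deriv (φ n) x|) '' Set.Icc (0:ℝ) L)))
      Filter.atTop (nhds 0)) :
    ∃ k : ℕ, 1 ≤ k ∧ βstar = betaCrit ℏ m lam L k := by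
  obtain ⟨κ, hκ⟩ : ∃ κ, κ = ℏ ^ 2 / (4 * m) := ⟨_, rfl⟩
  have hκ0 : 0 < κ := by rw [hκ]; positivity
  obtain ⟨c, hc⟩ : ∃ c, c = (ℏ * lam - βstar) / κ := ⟨_, rfl⟩
  obtain ⟨S, T, hS, hT, hS0, hT0, hSL⟩ := gp_fund c L hL
  by_cases hz : S L = 0
  · obtain ⟨k, hk, hck⟩ := hSL hz
    refine ⟨k, hk, ?_⟩
    unfold betaCrit
    rw [← hck, hc, ← hκ]
    field_simp
    ring
  exfalso
  have hSc : Continuous S := continuous_iff_continuousAt.2 fun x => (hS x).continuousAt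
  obtain ⟨K, hK⟩ := isCompact_Icc.exists_bound_of_continuousOn (s := Set.Icc 0 L) hSc.continuousOn
  simp only [Real.norm_eq_abs] at hK
  have hK0 : 0 ≤ K := (abs_nonneg _).trans (hK 0 ⟨le_rfl, hL.le⟩)
  set M : ℕ → ℝ := fun n => sSup ((fun x => |φ n x|) '' Set.Icc (0:ℝ) L) with hMdef
  have hbdd : ∀ n, BddAbove ((fun x => |φ n x|) '' Set.Icc (0:ℝ) L) := fun n =>
    (isCompact_Icc.image_of_continuousOn (hsol n).1.abs).bddAbove
  have hM : ∀ n, ∀ x ∈ Set.Icc (0:ℝ) L, |φ n x| ≤ M n := fun n x hx =>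
    le_csSup (hbdd n) ⟨x, hx, rfl⟩
  have hMpos : ∀ n, 0 < M n := by
    intro n
    obtain ⟨x, hx, hxn⟩ := hne n
    exact (abs_pos.2 hxn).trans_le (hM n x hx)
  have hM0 : Tendsto M atTop (𝓝 0) := by
    refine squeeze_zero (fun n => (hMpos n).le) (fun n => ?_) hsmall
    refine le_add_of_nonneg_right (Real.sSup_nonneg ?_)
    rintro _ ⟨x, _, rfl⟩
    exact abs_nonneg _
  set ε : ℕ → ℝ := fun n => (|β n - βstar| + |g| * M n ^ 2) / κ with hε
  have hε0 : Tendsto ε atTop (𝓝 0) := by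
    have a1 : Tendsto (fun n => |β n - βstar|) atTop (𝓝 0) := by
      simpa using (hβ.sub_const βstar).abs
    have a2 := (a1.add ((hM0.pow 2).const_mul |g|)).div_const κ
    simpa using a2
  have key : ∀ n, 1 ≤ ε n * (K * L * (K / |S L| + 1)) := by
    intro n
    obtain ⟨hcont, hC2, hode, h0, hL0⟩ := hsol n
    have hεn : 0 ≤ ε n := by simp only [hε]; positivity
    have hψc : ContinuousOn (derivWithin (φ n) (Set.Icc 0 L)) (Set.Icc 0 L) :=
      (hC1 n).continuousOn_derivWithin (uniqueDiffOn_Icc hL) le_rfl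
    have heq : ∀ x ∈ Set.Ioo 0 L, derivWithin (φ n) (Set.Icc 0 L) x = deriv (φ n) x :=
      fun x hx => derivWithin_of_mem_nhds (Icc_mem_nhds hx.1 hx.2)
    have h1 : ∀ x ∈ Set.Ioo 0 L, HasDerivAt (φ n) (derivWithin (φ n) (Set.Icc 0 L) x) x := by
      intro x hx
      rw [heq x hx]
      exact ((hC2.differentiableOn (by norm_num)).differentiableAt
        (isOpen_Ioo.mem_nhds hx)).hasDerivAt
    have h2 : ∀ x ∈ Set.Ioo 0 L,
        HasDerivAt (derivWithin (φ n) (Set.Icc 0 L)) (deriv (deriv (φ n)) x) x := by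
      intro x hx
      have d : ContDiffOn ℝ 1 (deriv (φ n)) (Set.Ioo 0 L) :=
        hC2.deriv_of_isOpen isOpen_Ioo (by norm_num)
      have d2 := ((d.differentiableOn (by norm_num)).differentiableAt
        (isOpen_Ioo.mem_nhds hx)).hasDerivAt
      refine d2.congr_of_eventuallyEq ?_
      filter_upwards [isOpen_Ioo.mem_nhds hx] with y hy using heq y hy
    have hD : 0 ≤ ε n * M n := mul_nonneg hεn (hMpos n).le
    have hh : ∀ x ∈ Set.Ioo 0 L, |deriv (deriv (φ n)) x + c * φ n x| ≤ ε n * M n := by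
      intro x hx
      have o := hode x hx
      rw [← hκ] at o
      have e : deriv (deriv (φ n)) x + c * φ n x
          = ((β n - βstar) + g * φ n x ^ 2) / κ * φ n x := by
        rw [hc]
        field_simp
        linarith
      have hx' := hM n x ⟨hx.1.le, hx.2.le⟩
      rw [e, abs_mul, abs_div, abs_of_pos hκ0]
      have f : |(β n - βstar) + g * φ n x ^ 2| ≤ |β n - βstar| + |g| * M n ^ 2 := by
        refine (abs_add_le _ _).trans ?_
        rw [abs_mul, abs_pow]
        gcongr
      simp only [hε]
      gcongr
    have W := gp_wronskian c L K (ε n * M n) S T (φ n) _ _ hD hS hT hS0 hT0 hK hcont hψc h1 h2 h0 hh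
    set p := derivWithin (φ n) (Set.Icc 0 L) 0
    have hSL0 : 0 < |S L| := abs_pos.2 hz
    have hp : |p| ≤ ε n * M n * K * L / |S L| := by
      have := W L ⟨hL.le, le_rfl⟩
      rw [hL0, zero_sub, abs_neg, abs_mul] at this
      rwa [le_div_iff₀ hSL0]
    have hle : M n ≤ ε n * (K * L * (K / |S L| + 1)) * M n := by
      refine csSup_le ⟨_, 0, ⟨le_rfl, hL.le⟩, rfl⟩ ?_
      rintro _ ⟨x, hx, rfl⟩
      have w := W x hx
      have a : |φ n x| ≤ |φ n x - p * S x| + |p * S x| := by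
        simpa using abs_add_le (φ n x - p * S x) (p * S x)
      have b : |p * S x| ≤ ε n * M n * K * L / |S L| * K := by
        rw [abs_mul]
        have := hK x hx
        gcongr
      calc |φ n x| ≤ ε n * M n * K * L + ε n * M n * K * L / |S L| * K := by linarith
        _ = _ := by field_simp; ring
    exact le_of_mul_le_mul_right (by simpa using hle) (hMpos n)
  have hlim := hε0.mul_const (K * L * (K / |S L| + 1))
  rw [zero_mul] at hlim
  have := ge_of_tendsto' hlim key
  linarith
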